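/- Let m be a model, σ an environment, d a description having the same tree shape as m, and x a variable occurring in both m and d. Then d is generated by m in σ if and only if the x-factor d.x is generated by the x-factor m.x in σ and the x-context d.x̄ is generated by the x-context m.x̄ in σ; formally, d ∈ m[σ] ⟺ (d.x ∈ m.x[σ]) ∧ (d.x̄ ∈ m.x̄[σ]). -/

import Mathlib

/-- A k-ary pattern: a relation between a whole value and a list of part values,
such that the whole is unique given the parts. -/
structure Pattern (V : Type) where
  rel : V → List V → Prop
  functional : ∀ (vs : List V) (v v' : V), rel v vs → rel v' vs → v = v'

/-- A model: a finite tree whose nodes carry variables (naturals) and are either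
unknowns, expressions, or pattern nodes with submodels. -/
inductive Model (V E : Type) : Type where
  | unknown : ℕ → Model V E
  | expr : ℕ → E → Model V E
  | pat : ℕ → Pattern V → List (Model V E) → Model V E

/-- A description: a finite tree assigning a value to each variable. -/
inductive Descr (V : Type) : Type where
  | atom : ℕ → V → Descr V
  | comp : ℕ → V → Pattern V → List (Descr V) → Descr V

def Descr.value {V : Type} : Descr V → V
  | .atom _ v => v
  | .comp _ v _ _ => v

def Descr.rootVar {V : Type} : Descr V → ℕ
  | .atom x _ => x
  | .comp x _ _ _ => x

def Model.rootVar {V E : Type} : Model V E → ℕ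
  | .unknown x => x
  | .expr x _ => x
  | .pat x _ _ => x

/-- Variables of a model. -/
def Model.vars {V E : Type} : Model V E → List ℕ
  | .unknown x => [x]
  | .expr x _ => [x]
  | .pat x _ ms => x :: (ms.attach.map (fun m => m.1.vars)).flatten
decreasing_by
  simp_wf
  have := List.sizeOf_lt_of_mem m.2
  omega

/-- Variables of a description. -/
def Descr.vars {V : Type} : Descr V → List ℕ
  | .atom x _ => [x]
  | .comp x _ _ ds => x :: (ds.attach.map (fun d => d.1.vars)).flatten
decreasing_by
  simp_wf
  have := List.sizeOf_lt_of_mem d.2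
  omega

/-- The generation relation `d ∈ m[σ]`, parameterized by a partial evaluation
function for expressions. -/
inductive Gen {V E : Type} (ev : E → (ℕ → Option V) → Option V) :
    Model V E → (ℕ → Option V) → Descr V → Prop where
  | unknown (x : ℕ) (σ : ℕ → Option V) (v : V) :
      Gen ev (.unknown x) σ (.atom x v)
  | expr (x : ℕ) (e : E) (σ : ℕ → Option V) (v : V) :
      ev e σ = some v → Gen ev (.expr x e) σ (.atom x v)
  | pat (x : ℕ) (P : Pattern V) (ms : List (Model V E)) (σ : ℕ → Option V)
      (v : V) (ds : List (Descr V)) :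
      ms.length = ds.length →
      P.rel v (ds.map Descr.value) →
      (∀ (i : ℕ) (h₁ : i < ms.length) (h₂ : i < ds.length),
        Gen ev (ms.get ⟨i, h₁⟩) σ (ds.get ⟨i, h₂⟩)) →
      Gen ev (.pat x P ms) σ (.comp x v P ds)

/-- `Model.Splits m x f c`: the variable `x` occurs in `m`, the `x`-factor (subtree
rooted at `x`) is `f`, and the `x`-context (with the subtree at `x` replaced by an
unknown) is `c`. -/
inductive Model.Splits {V E : Type} : Model V E → ℕ → Model V E → Model V E → Prop where
  | here (m : Model V E) : Model.Splits m m.rootVar m (.unknown m.rootVar)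
  | there (y : ℕ) (P : Pattern V) (ms : List (Model V E)) (i : ℕ) (h : i < ms.length)
      (x : ℕ) (f c : Model V E) :
      Model.Splits (ms.get ⟨i, h⟩) x f c →
      Model.Splits (.pat y P ms) x f (.pat y P (ms.set i c))

/-- `Descr.Splits d x f c`: the variable `x` occurs in `d`, the `x`-factor is `f`,
and the `x`-context (subtree at `x` replaced by an atomic description carrying the
value at `x`) is `c`. -/
inductive Descr.Splits {V : Type} : Descr V → ℕ → Descr V → Descr V → Prop where
  | here (d : Descr V) : Descr.Splits d d.rootVar d (.atom d.rootVar d.value)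
  | there (y : ℕ) (v : V) (P : Pattern V) (ds : List (Descr V)) (i : ℕ) (h : i < ds.length)
      (x : ℕ) (f c : Descr V) :
      Descr.Splits (ds.get ⟨i, h⟩) x f c →
      Descr.Splits (.comp y v P ds) x f (.comp y v P (ds.set i c))

/-!
Generation at a pattern node is a condition on the values of the children together with generation
child by child. Replacing the child on the path to `x` by its context keeps its value, so the
equivalence passes from that child to the node, provided the path to `x` enters the same child in
the model and in the description. It does: generation forces both trees to list the same variables,
and `x` occurs only once in the description.
-/

theorem ne_of_count_cons_le_one {α : Type*} [DecidableEq α] {a b : α} {l : List α}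
    (hcount : (a :: l).count b ≤ 1) (hb : b ∈ l) : a ≠ b := by
  rintro rfl
  have : 0 < l.count a := List.count_pos_iff.2 hb
  rw [List.count_cons_self] at hcount
  omega

theorem index_eq_of_count_flatMap_le_one {α β : Type*} [DecidableEq β] {f : α → List β} {b : β}
    {l : List α} (hcount : (l.flatMap f).count b ≤ 1) {i j : ℕ} {hi : i < l.length}
    {hj : j < l.length} (hbi : b ∈ f l[i]) (hbj : b ∈ f l[j]) : i = j := by
  induction l generalizing i j with
  | nil => simp at hi
  | cons a l ih =>
    rw [List.flatMap_cons, List.count_append] at hcount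
    have not_head_and_tail {k : ℕ} {hk : k < l.length} (ha : b ∈ f a) (hbk : b ∈ f l[k]) :
        False := by
      have : 0 < (f a).count b := List.count_pos_iff.2 ha
      have : 0 < (l.flatMap f).count b :=
        List.count_pos_iff.2 (List.mem_flatMap_of_mem (List.getElem_mem hk) hbk)
      omega
    match i, j with
    | 0, 0 => rfl
    | 0, j + 1 => exact (not_head_and_tail hbi hbj).elim
    | i + 1, 0 => exact (not_head_and_tail hbj hbi).elim
    | i + 1, j + 1 => exact congrArg (· + 1) (ih (by omega) hbi hbj)

theorem forall₂_set {α β : Type*} {R : α → β → Prop} {as : List α} {bs : List β} {a : α} {b : β}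
    (h : List.Forall₂ R as bs) (hab : R a b) (i : ℕ) :
    List.Forall₂ R (as.set i a) (bs.set i b) := by
  induction h generalizing i with
  | nil => exact .nil
  | cons hhead htail ih =>
    cases i with
    | zero => exact .cons hab htail
    | succ i => exact .cons hhead (ih i)

namespace Model

variable {V E : Type} {m f c : Model V E} {x y : ℕ} {P : Pattern V} {ms : List (Model V E)}

theorem vars_pat : (pat y P ms).vars = y :: ms.flatMap vars := by
  rw [vars, List.flatMap_def, List.attach_map_val (f := vars)]

theorem rootVar_mem_vars (m : Model V E) : m.rootVar ∈ m.vars := by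
  cases m <;> simp [vars, rootVar]

theorem mem_vars_pat_of_mem_child (hm : m ∈ ms) (hx : x ∈ m.vars) :
    x ∈ (pat y P ms).vars := by
  rw [vars_pat]
  exact List.mem_cons_of_mem _ (List.mem_flatMap_of_mem hm hx)

theorem ne_of_mem_child_of_count_le_one (hcount : (pat y P ms).vars.count x ≤ 1) (hm : m ∈ ms)
    (hx : x ∈ m.vars) : y ≠ x := by
  rw [vars_pat] at hcount
  exact ne_of_count_cons_le_one hcount (List.mem_flatMap_of_mem hm hx)

theorem Splits.mem_vars (h : m.Splits x f c) : x ∈ m.vars := by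
  induction h with
  | here m => exact m.rootVar_mem_vars
  | there _ _ _ _ _ _ _ _ _ ih => exact mem_vars_pat_of_mem_child (List.get_mem _ _) ih

theorem Splits.mem_vars_context (h : m.Splits x f c) : x ∈ c.vars := by
  induction h with
  | here m => exact (unknown m.rootVar).rootVar_mem_vars
  | there _ _ _ _ hi _ _ _ _ ih => exact mem_vars_pat_of_mem_child (List.mem_set hi _) ih

end Model

namespace Descr

variable {V : Type} {d f c : Descr V} {x y : ℕ} {v : V} {P : Pattern V} {ds : List (Descr V)}

theorem vars_comp : (comp y v P ds).vars = y :: ds.flatMap vars := by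
  rw [vars, List.flatMap_def, List.attach_map_val (f := vars)]

theorem rootVar_mem_vars (d : Descr V) : d.rootVar ∈ d.vars := by
  cases d <;> simp [vars, rootVar]

theorem count_flatMap_vars_le_count_vars_comp :
    (ds.flatMap vars).count x ≤ (comp y v P ds).vars.count x := by
  rw [vars_comp]
  exact List.count_le_count_cons

theorem count_vars_le_count_vars_comp_of_mem (hd : d ∈ ds) :
    d.vars.count x ≤ (comp y v P ds).vars.count x := by
  have hsublist : d.vars.Sublist (ds.flatMap vars) := by
    rw [List.flatMap_def]
    exact List.sublist_flatten_of_mem (List.mem_map_of_mem hd)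
  exact (hsublist.count_le x).trans count_flatMap_vars_le_count_vars_comp

theorem ne_of_mem_child_of_count_le_one (hcount : (comp y v P ds).vars.count x ≤ 1) (hd : d ∈ ds)
    (hx : x ∈ d.vars) : y ≠ x := by
  rw [vars_comp] at hcount
  exact ne_of_count_cons_le_one hcount (List.mem_flatMap_of_mem hd hx)

theorem Splits.mem_vars (h : d.Splits x f c) : x ∈ d.vars := by
  induction h with
  | here d => exact d.rootVar_mem_vars
  | there _ _ _ _ _ _ _ _ _ _ ih =>
    rw [vars_comp]
    exact List.mem_cons_of_mem _ (List.mem_flatMap_of_mem (List.get_mem _ _) ih)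

theorem Splits.value_context (h : d.Splits x f c) : c.value = d.value := by
  cases h <;> rfl

theorem map_value_set {i : ℕ} (hi : i < ds.length) (hvalue : d.value = ds[i].value) :
    (ds.set i d).map value = ds.map value := by
  rw [List.map_set, hvalue, ← List.getElem_map value (h := by simpa using hi),
    List.set_getElem_self]

end Descr

section Gen

variable {V E : Type} {ev : E → (ℕ → Option V) → Option V} {σ : ℕ → Option V}
  {m mx mc : Model V E} {d dx dc : Descr V} {x y z i j : ℕ} {v : V} {P Q : Pattern V}
  {ms : List (Model V E)} {ds : List (Descr V)}

theorem gen_pat_comp_iff :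
    Gen ev (.pat y P ms) σ (.comp z v Q ds) ↔
      y = z ∧ P = Q ∧ P.rel v (ds.map Descr.value) ∧ List.Forall₂ (Gen ev · σ) ms ds := by
  constructor
  · rintro (_ | _ | ⟨_, _, _, _, _, _, hlength, hrel, hchildren⟩)
    exact ⟨rfl, rfl, hrel, List.forall₂_iff_get.2 ⟨hlength, hchildren⟩⟩
  · rintro ⟨rfl, rfl, hrel, hchildren⟩
    obtain ⟨hlength, hget⟩ := List.forall₂_iff_get.1 hchildren
    exact .pat _ _ _ _ _ _ hlength hrel hget

theorem Gen.rootVar_eq (h : Gen ev m σ d) : m.rootVar = d.rootVar := by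
  cases h <;> rfl

theorem Gen.vars_eq (h : Gen ev m σ d) : m.vars = d.vars := by
  induction h with
  | unknown => rw [Model.vars, Descr.vars]
  | expr => rw [Model.vars, Descr.vars]
  | pat _ _ ms _ _ ds hlength _ _ ih =>
    have hmap : ms.map Model.vars = ds.map Descr.vars :=
      List.ext_getElem (by simpa using hlength) fun i hm hd => by
        simpa using ih i (by simpa using hm) (by simpa using hd)
    rw [Model.vars_pat, Descr.vars_comp, List.flatMap_def, List.flatMap_def, hmap]

theorem Gen.exists_mem_vars_getElem (h : Gen ev (.pat y P ms) σ (.comp z v Q ds))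
    (hi : i < ms.length) (hx : x ∈ ms[i].vars) : ∃ hi' : i < ds.length, x ∈ ds[i].vars := by
  obtain ⟨-, -, -, hchildren⟩ := gen_pat_comp_iff.1 h
  have hi' : i < ds.length := hchildren.length_eq ▸ hi
  exact ⟨hi', (hchildren.get hi hi').vars_eq ▸ hx⟩

theorem Gen.set_child (h : Gen ev (.pat y P ms) σ (.comp z v Q ds)) (hi : i < ds.length)
    (hvalue : d.value = ds[i].value) (hgen : Gen ev m σ d) :
    Gen ev (.pat y P (ms.set i m)) σ (.comp z v Q (ds.set i d)) := by
  rw [gen_pat_comp_iff] at h ⊢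
  obtain ⟨hvar, hpattern, hrel, hchildren⟩ := h
  exact ⟨hvar, hpattern, (Descr.map_value_set hi hvalue).symm ▸ hrel, forall₂_set hchildren hgen i⟩

theorem gen_pat_comp_iff_set_child {p : Prop} (hm : i < ms.length) (hd : i < ds.length)
    (hvalue : dc.value = ds[i].value) (hchild : Gen ev ms[i] σ ds[i] ↔ p ∧ Gen ev mc σ dc) :
    Gen ev (.pat y P ms) σ (.comp z v Q ds) ↔
      p ∧ Gen ev (.pat y P (ms.set i mc)) σ (.comp z v Q (ds.set i dc)) := by
  constructor
  · intro h
    obtain ⟨-, -, -, hchildren⟩ := gen_pat_comp_iff.1 h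
    obtain ⟨hp, hcontext⟩ := hchild.1 (hchildren.get hm hd)
    exact ⟨hp, h.set_child hd hvalue hcontext⟩
  · rintro ⟨hp, h⟩
    obtain ⟨-, -, -, hchildren⟩ := gen_pat_comp_iff.1 h
    have hcontext : Gen ev mc σ dc := by
      simpa using hchildren.get (i := i) (by simpa using hm) (by simpa using hd)
    -- Replacing the context by the original child is again an instance of `Gen.set_child`.
    simpa using h.set_child (i := i) (by simpa using hd) (by simpa using hvalue.symm)
      (hchild.2 ⟨hp, hcontext⟩)

theorem index_eq_of_gen_set_child (h : Gen ev (.pat y P (ms.set i m)) σ (.comp z v Q (ds.set j d)))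
    (hcount : (ds.flatMap Descr.vars).count x ≤ 1) (hi : i < ms.length) (hj : j < ds.length)
    (hm : x ∈ m.vars) (hd : x ∈ ds[j].vars) : i = j := by
  by_contra hne
  obtain ⟨hi', hx⟩ := h.exists_mem_vars_getElem (i := i) (by simpa using hi) (by simpa using hm)
  rw [List.getElem_set_ne (Ne.symm hne)] at hx
  exact hne (index_eq_of_count_flatMap_le_one hcount hx hd)

theorem gen_iff_factor_and_context_general (hcount : d.vars.count x ≤ 1)
    (hmsplit : m.Splits x mx mc) (hdsplit : d.Splits x dx dc) :
    Gen ev m σ d ↔ Gen ev mx σ dx ∧ Gen ev mc σ dc := by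
  induction hmsplit generalizing d dx dc with
  | here m =>
    generalize hroot : m.rootVar = x at hcount hdsplit
    cases hdsplit with
    | here => exact ⟨fun h => ⟨h, .unknown _ _ _⟩, And.left⟩
    | there z v Q ds j hj _ _ _ hdchild =>
      have hne : z ≠ x :=
        Descr.ne_of_mem_child_of_count_le_one hcount (List.get_mem _ _) hdchild.mem_vars
      exact iff_of_false (fun h => hne (h.rootVar_eq.symm.trans hroot)) (fun h => nomatch h.2)
  | there y P ms i hi x mx mc hmchild ih =>
    cases hdsplit with
    | here =>
      refine iff_of_false (fun h => ?_) (fun h => nomatch h.2)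
      exact Model.ne_of_mem_child_of_count_le_one (h.vars_eq ▸ hcount) (List.get_mem _ _)
        hmchild.mem_vars h.rootVar_eq
    | there z v Q ds j hj _ _ dc hdchild =>
      have hcount_children : (ds.flatMap Descr.vars).count x ≤ 1 :=
        Descr.count_flatMap_vars_le_count_vars_comp.trans hcount
      by_cases hij : i = j
      · subst hij
        have hcount_child : ds[i].vars.count x ≤ 1 :=
          (Descr.count_vars_le_count_vars_comp_of_mem (List.getElem_mem hj)).trans hcount
        exact gen_pat_comp_iff_set_child hi hj hdchild.value_context (ih hcount_child hdchild)
      · refine iff_of_false (fun h => hij ?_) (fun h => hij ?_)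
        · rw [← List.set_getElem_self hi, ← List.set_getElem_self hj] at h
          exact index_eq_of_gen_set_child h hcount_children hi hj hmchild.mem_vars hdchild.mem_vars
        · exact index_eq_of_gen_set_child h.2 hcount_children hi hj hmchild.mem_vars_context
            hdchild.mem_vars

end Gen

/-- Lemma 1 of the paper. Let `m` be a model, `σ` an environment,
`d` a description, and `x` a variable occurring in both `m` and `d` (witnessed by
the split of `m` at `x` into the `x`-factor `mx` and `x`-context `mc`, and the
split of `d` at `x` into `dx` and `dc`). Then
`d ∈ m[σ] ↔ d.x ∈ m.x[σ] ∧ d.x̄ ∈ m.x̄[σ]`. -/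
theorem gen_iff_factor_and_context {V E : Type}
    (ev : E → (ℕ → Option V) → Option V)
    (m : Model V E) (σ : ℕ → Option V) (d : Descr V) (x : ℕ)
    (mx mc : Model V E) (dx dc : Descr V)
    (hmnodup : m.vars.Nodup) (hdnodup : d.vars.Nodup)
    (hmsplit : m.Splits x mx mc) (hdsplit : d.Splits x dx dc) :
    Gen ev m σ d ↔ (Gen ev mx σ dx ∧ Gen ev mc σ dc) :=
  gen_iff_factor_and_context_general (List.nodup_iff_count_le_one.1 hdnodup x) hmsplit hdsplit
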